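/- arXiv:1802.10286 — 2 statements merged into one kernel-verified Lean document; each statement's English description precedes it below -/
import Mathlib

section
/- For every ε ≥ ε* and every integer k ≥ 2, one has r_k + q_k = ε(16k⁴π⁴ + 36k²π²) − (4/3)k²π² + 9 > 0; equivalently, D_k(0; τ, ε) > 0 for every τ ≥ 0. Hence k = 1 is the unique spatial mode whose characteristic function acquires a zero root as ε decreases through ε*. -/
/-!
For `k ≥ 1` and `x = (kπ)²`, the sum `r_k + q_k` is affine in `ε` with slope `16x² + 36x > 0`, so it
is positive exactly when `ε` exceeds its root `(4x/3 - 9)/(16x² + 36x)`, which is `ε*` for `k = 1`.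
This root is not monotone in `x`: it increases up to `x = (27 + √972)/4 ≈ 14.5 > π²` and
decreases afterwards. For `0 < x < y` its value at `y` is below its value at `x` exactly when
`972 < (4x - 27)(4y - 27)`, and this holds for `x = π² > 9` and `y = (kπ)² ≥ 4π² > 36`.
-/

/-- `p_k` coefficient of the `k`-th mode characteristic function. -/
noncomputable def pk (ε : ℝ) (k : ℕ) : ℝ := 4 * (ε + 1) * (k : ℝ) ^ 2 * Real.pi ^ 2 + 1

/-- `r_k` coefficient of the `k`-th mode characteristic function. -/
noncomputable def rk (ε : ℝ) (k : ℕ) : ℝ :=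
  16 * ε * (k : ℝ) ^ 4 * Real.pi ^ 4 + 4 * (k : ℝ) ^ 2 * Real.pi ^ 2

/-- `s_k` coefficient of the `k`-th mode characteristic function. -/
noncomputable def sk : ℝ := 23 / 3

/-- `q_k` coefficient of the `k`-th mode characteristic function. -/
noncomputable def qk (ε : ℝ) (k : ℕ) : ℝ :=
  4 * (9 * ε - 4 / 3) * (k : ℝ) ^ 2 * Real.pi ^ 2 + 9

/-- The `k`-th mode characteristic function
`D_k(λ; τ, ε) = λ² + p_k λ + r_k + (s_k λ + q_k) e^{-λτ}`. -/
noncomputable def Dk (ε τ : ℝ) (k : ℕ) (z : ℂ) : ℂ :=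
  z ^ 2 + (pk ε k : ℂ) * z + (rk ε k : ℂ) +
    ((sk : ℂ) * z + (qk ε k : ℂ)) * Complex.exp (-z * (τ : ℂ))

/-- The critical diffusion ratio `ε* = (4π²/3 - 9)/(16π⁴ + 36π²)`. -/
noncomputable def epsStar : ℝ := (4 * Real.pi ^ 2 / 3 - 9) / (16 * Real.pi ^ 4 + 36 * Real.pi ^ 2)

/-- The zeroth-mode characteristic function `D_0(λ; τ) = λ² + λ + ((23/3)λ + 9)e^{-λτ}`. -/
noncomputable def D0 (τ : ℝ) (z : ℂ) : ℂ :=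
  z ^ 2 + z + ((23 / 3 : ℂ) * z + 9) * Complex.exp (-z * (τ : ℂ))

/-- The critical Hopf frequency `ω* = √((520 + √296644)/18)`. -/
noncomputable def omegaStar : ℝ := Real.sqrt ((520 + Real.sqrt 296644) / 18)

/-- The diffusion ratio at which a mode acquires a zero root, that is, the root in `ε` of
`r_k + q_k`, as a function of `x = (kπ)²`. At `k = 0` there is no such root, and the value there is
the junk `-9 / 0 = 0`. -/
noncomputable def criticalRatio (x : ℝ) : ℝ := (4 * x / 3 - 9) / (16 * x ^ 2 + 36 * x)

theorem criticalRatio_pi_sq : criticalRatio (Real.pi ^ 2) = epsStar := by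
  rw [criticalRatio, epsStar, ← pow_mul]

theorem criticalRatio_sub_criticalRatio {x y : ℝ} (hx : 0 < x) (hy : 0 < y) :
    criticalRatio x - criticalRatio y =
      (y - x) * ((4 * x - 27) * (4 * y - 27) - 972) /
        (12 * x * y * (4 * x + 9) * (4 * y + 9)) := by
  unfold criticalRatio
  field_simp
  ring

theorem criticalRatio_lt_criticalRatio_iff {x y : ℝ} (hx : 0 < x) (hxy : x < y) :
    criticalRatio y < criticalRatio x ↔ 972 < (4 * x - 27) * (4 * y - 27) := by
  have hy : 0 < y := hx.trans hxy
  rw [← sub_pos, criticalRatio_sub_criticalRatio hx hy, div_pos_iff_of_pos_right (by positivity),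
    mul_pos_iff_of_pos_left (sub_pos.mpr hxy), sub_pos]

theorem criticalRatio_lt_epsStar {k : ℕ} (hk : 2 ≤ k) :
    criticalRatio ((k * Real.pi) ^ 2) < epsStar := by
  have hpi : 9 < Real.pi ^ 2 := by nlinarith [Real.pi_gt_three]
  have hk_sq : (4 : ℝ) ≤ (k : ℝ) ^ 2 := by exact_mod_cast Nat.pow_le_pow_left hk 2
  have hmode : 4 * Real.pi ^ 2 ≤ (k * Real.pi) ^ 2 := by rw [mul_pow]; gcongr
  rw [← criticalRatio_pi_sq, criticalRatio_lt_criticalRatio_iff (by positivity) (by linarith)]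
  calc (972 : ℝ) < (4 * 9 - 27) * (4 * (4 * 9) - 27) := by norm_num
    _ ≤ (4 * Real.pi ^ 2 - 27) * (4 * (k * Real.pi) ^ 2 - 27) := by
      apply mul_le_mul <;> linarith

theorem rk_add_qk (ε : ℝ) (k : ℕ) :
    rk ε k + qk ε k =
      ε * (16 * (k : ℝ) ^ 4 * Real.pi ^ 4 + 36 * (k : ℝ) ^ 2 * Real.pi ^ 2) -
        (4 / 3) * (k : ℝ) ^ 2 * Real.pi ^ 2 + 9 := by
  unfold rk qk
  ring

theorem rk_add_qk_pos_iff {ε : ℝ} {k : ℕ} (hk : k ≠ 0) :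
    0 < rk ε k + qk ε k ↔ criticalRatio ((k * Real.pi) ^ 2) < ε := by
  have hsum : rk ε k + qk ε k =
      ε * (16 * ((k * Real.pi) ^ 2) ^ 2 + 36 * (k * Real.pi) ^ 2) -
        (4 * (k * Real.pi) ^ 2 / 3 - 9) := by
    rw [rk_add_qk]
    ring
  rw [hsum, sub_pos, criticalRatio, div_lt_iff₀ (by positivity)]

theorem Dk_zero (ε τ : ℝ) (k : ℕ) : Dk ε τ k 0 = ((rk ε k + qk ε k : ℝ) : ℂ) := by
  simp [Dk]

/-- For every `ε ≥ ε*` and every integer `k ≥ 2`,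
`r_k + q_k = ε(16k⁴π⁴ + 36k²π²) - (4/3)k²π² + 9 > 0`; equivalently `D_k(0; τ, ε) > 0`
for every `τ ≥ 0`.  Hence `k = 1` is the unique mode whose characteristic function
acquires a zero root as `ε` decreases through `ε*`. -/
theorem Dk_zero_positive_for_higher_modes (ε : ℝ) (hε : epsStar ≤ ε) (k : ℕ) (hk : 2 ≤ k) :
    (rk ε k + qk ε k =
      ε * (16 * (k : ℝ) ^ 4 * Real.pi ^ 4 + 36 * (k : ℝ) ^ 2 * Real.pi ^ 2) -
        (4 / 3) * (k : ℝ) ^ 2 * Real.pi ^ 2 + 9) ∧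
    0 < rk ε k + qk ε k ∧
    ∀ τ : ℝ, 0 ≤ τ → Dk ε τ k 0 = ((rk ε k + qk ε k : ℝ) : ℂ) := by
  have hpos : 0 < rk ε k + qk ε k :=
    (rk_add_qk_pos_iff (by lia)).mpr ((criticalRatio_lt_epsStar hk).trans_le hε)
  exact ⟨rk_add_qk ε k, hpos, fun τ _ => Dk_zero ε τ k⟩
end

section
/- The number ω* = √((520 + √296644)/18) is the unique positive real root of ω⁴ − (520/9)ω² − 81 = 0, and satisfies 7.69 < ω* < 7.70. Moreover, for any ω > 0, there exists τ ∈ ℝ such that D_0(iω; τ) = 0 if and only if ω = ω*. -/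
/-!
On the imaginary axis the delay factor `exp (-iωτ)` has modulus one and, for `ω ≠ 0`, runs through
the whole unit circle as `τ` varies. So `P(iω) + Q(iω) exp (-iωτ)` vanishes for some delay exactly
when `P(iω)` and `Q(iω)` have equal modulus. For real quadratic `P` and linear `Q` this is a
quadratic equation in `ω²`; for `D0` its two roots have product `-81 < 0`, so exactly one of them
is positive, namely `omegaStar ^ 2`.
-/

theorem exists_norm_eq_one_add_mul_eq_zero_iff {K : Type*} [NormedDivisionRing K] {a b : K} :
    (∃ u : K, ‖u‖ = 1 ∧ a + b * u = 0) ↔ ‖a‖ = ‖b‖ := by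
  constructor
  · rintro ⟨u, hu, h⟩
    rw [eq_neg_of_add_eq_zero_left h, norm_neg, norm_mul, hu, mul_one]
  · intro h
    rcases eq_or_ne b 0 with rfl | hb
    · exact ⟨1, norm_one, by simpa using h⟩
    · refine ⟨b⁻¹ * -a, ?_, by rw [mul_inv_cancel_left₀ hb, add_neg_cancel]⟩
      rw [norm_mul, norm_inv, norm_neg, h, inv_mul_cancel₀ (norm_ne_zero_iff.mpr hb)]

theorem exists_exp_neg_I_mul_eq_iff {ω : ℝ} (hω : ω ≠ 0) {u : ℂ} :
    (∃ τ : ℝ, Complex.exp (-(Complex.I * (ω : ℂ)) * (τ : ℂ)) = u) ↔ ‖u‖ = 1 := by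
  rw [Complex.norm_eq_one_iff, (mul_left_surjective₀ (neg_ne_zero.mpr hω)).exists
    (p := fun θ : ℝ => Complex.exp (θ * Complex.I) = u)]
  refine exists_congr fun τ => ?_
  have hexponent : -(Complex.I * (ω : ℂ)) * (τ : ℂ) = ((-ω * τ : ℝ) : ℂ) * Complex.I := by
    push_cast
    ring
  rw [hexponent]

theorem exists_add_mul_exp_neg_I_mul_eq_zero_iff {ω : ℝ} (hω : ω ≠ 0) {a b : ℂ} :
    (∃ τ : ℝ, a + b * Complex.exp (-(Complex.I * (ω : ℂ)) * (τ : ℂ)) = 0) ↔ ‖a‖ = ‖b‖ := by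
  simp_rw [← exists_norm_eq_one_add_mul_eq_zero_iff, ← exists_exp_neg_I_mul_eq_iff hω,
    exists_exists_eq_and]

/-- The characteristic function `(z² + p z + r) + (s z + q) e^{-zτ}` of a second-order linear
equation with a single delay `τ`. -/
noncomputable def delayCharFun (p r s q τ : ℝ) (z : ℂ) : ℂ :=
  z ^ 2 + p * z + r + (s * z + q) * Complex.exp (-z * (τ : ℂ))

theorem D0_eq_delayCharFun (τ : ℝ) (z : ℂ) : D0 τ z = delayCharFun 1 0 (23 / 3) 9 τ z := by
  simp [D0, delayCharFun]

theorem sq_norm_quadratic_I_mul (p r ω : ℝ) :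
    ‖(Complex.I * (ω : ℂ)) ^ 2 + p * (Complex.I * (ω : ℂ)) + r‖ ^ 2 =
      (r - ω ^ 2) ^ 2 + (p * ω) ^ 2 := by
  rw [Complex.sq_norm, ← Complex.normSq_add_mul_I]
  congr 1
  push_cast
  linear_combination (ω : ℂ) ^ 2 * Complex.I_sq

theorem sq_norm_linear_I_mul (s q ω : ℝ) :
    ‖s * (Complex.I * (ω : ℂ)) + q‖ ^ 2 = q ^ 2 + (s * ω) ^ 2 := by
  rw [Complex.sq_norm, ← Complex.normSq_add_mul_I]
  congr 1
  push_cast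
  ring

theorem exists_delayCharFun_I_mul_eq_zero_iff (p r s q : ℝ) {ω : ℝ} (hω : ω ≠ 0) :
    (∃ τ : ℝ, delayCharFun p r s q τ (Complex.I * (ω : ℂ)) = 0) ↔
      ω ^ 4 - (s ^ 2 + 2 * r - p ^ 2) * ω ^ 2 - (q ^ 2 - r ^ 2) = 0 := by
  unfold delayCharFun
  rw [exists_add_mul_exp_neg_I_mul_eq_zero_iff hω, ← sq_eq_sq₀ (norm_nonneg _) (norm_nonneg _),
    sq_norm_quadratic_I_mul, sq_norm_linear_I_mul, ← sub_eq_zero]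
  ring_nf

theorem abs_lt_sqrt_sq_add {p c : ℝ} (hc : 0 < c) : |p| < √(p ^ 2 + c) := by
  rw [Real.lt_sqrt (abs_nonneg p), sq_abs]
  exact lt_add_of_pos_right _ hc

theorem sq_sub_mul_sub_eq_zero_iff_of_nonneg {p q x : ℝ} (hq : 0 < q) (hx : 0 ≤ x) :
    x ^ 2 - p * x - q = 0 ↔ x = (p + √(p ^ 2 + 4 * q)) / 2 := by
  have hdiscrim : discrim 1 (-p) (-q) = √(p ^ 2 + 4 * q) * √(p ^ 2 + 4 * q) := by
    rw [Real.mul_self_sqrt (by positivity), discrim]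
    ring
  have hother_neg : (p - √(p ^ 2 + 4 * q)) / 2 < 0 := by
    have := (le_abs_self p).trans_lt (abs_lt_sqrt_sq_add (p := p) (c := 4 * q) (by positivity))
    linarith
  have hroots := quadratic_eq_zero_iff one_ne_zero hdiscrim x
  rw [neg_neg, mul_one, or_iff_left (hother_neg.trans_le hx).ne'] at hroots
  rw [← hroots]
  ring_nf

theorem biquadratic_eq_zero_iff {p q ω : ℝ} (hq : 0 < q) :
    ω ^ 4 - p * ω ^ 2 - q = 0 ↔ |ω| = √((p + √(p ^ 2 + 4 * q)) / 2) := by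
  have hroot_nonneg : 0 ≤ (p + √(p ^ 2 + 4 * q)) / 2 := by
    have := (neg_le_abs p).trans_lt (abs_lt_sqrt_sq_add (p := p) (c := 4 * q) (by positivity))
    linarith
  rw [← Real.sqrt_sq_eq_abs, Real.sqrt_inj (sq_nonneg ω) hroot_nonneg,
    ← sq_sub_mul_sub_eq_zero_iff_of_nonneg hq (sq_nonneg ω), ← pow_mul]

theorem omegaStar_eq_sqrt :
    omegaStar = √((520 / 9 + √((520 / 9) ^ 2 + 4 * 81)) / 2) := by
  have hsqrt : √((520 / 9) ^ 2 + 4 * 81) = √296644 / 9 := by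
    have hradicand : ((520 / 9) ^ 2 + 4 * 81 : ℝ) = 296644 / 9 ^ 2 := by norm_num
    rw [hradicand, Real.sqrt_div (by norm_num), Real.sqrt_sq (by norm_num)]
  rw [omegaStar, hsqrt]
  ring_nf

theorem omegaStar_pos : 0 < omegaStar :=
  Real.sqrt_pos.mpr (by positivity)

theorem omegaStar_mem_Ioo : omegaStar ∈ Set.Ioo 7.69 7.70 := by
  have hlower : 544.5 < √296644 := by
    rw [Real.lt_sqrt (by norm_num)]
    norm_num
  have hupper : √296644 < 545 := by
    rw [Real.sqrt_lt' (by norm_num)]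
    norm_num
  constructor
  · rw [omegaStar, Real.lt_sqrt (by norm_num)]
    linarith
  · rw [omegaStar, Real.sqrt_lt' (by norm_num)]
    linarith

theorem biquadratic_eq_zero_iff_eq_omegaStar {ω : ℝ} (hω : 0 < ω) :
    ω ^ 4 - (520 / 9) * ω ^ 2 - 81 = 0 ↔ ω = omegaStar := by
  rw [biquadratic_eq_zero_iff (by norm_num), abs_of_pos hω, omegaStar_eq_sqrt]

theorem exists_D0_I_mul_eq_zero_iff {ω : ℝ} (hω : ω ≠ 0) :
    (∃ τ : ℝ, D0 τ (Complex.I * (ω : ℂ)) = 0) ↔ ω ^ 4 - (520 / 9) * ω ^ 2 - 81 = 0 := by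
  simp_rw [D0_eq_delayCharFun, exists_delayCharFun_I_mul_eq_zero_iff _ _ _ _ hω]
  norm_num

/-- `ω* = √((520 + √296644)/18)` is the unique positive real root of
`ω⁴ - (520/9)ω² - 81 = 0` and satisfies `7.69 < ω* < 7.70`.  Moreover, for any `ω > 0`
there exists `τ ∈ ℝ` with `D_0(iω; τ) = 0` if and only if `ω = ω*`. -/
theorem omegaStar_characterization :
    (0 < omegaStar ∧ omegaStar ^ 4 - (520 / 9) * omegaStar ^ 2 - 81 = 0) ∧
    (∀ ω : ℝ, 0 < ω → ω ^ 4 - (520 / 9) * ω ^ 2 - 81 = 0 → ω = omegaStar) ∧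
    (7.69 < omegaStar ∧ omegaStar < 7.70) ∧
    (∀ ω : ℝ, 0 < ω →
      ((∃ τ : ℝ, D0 τ (Complex.I * (ω : ℂ)) = 0) ↔ ω = omegaStar)) := by
  refine ⟨⟨omegaStar_pos, (biquadratic_eq_zero_iff_eq_omegaStar omegaStar_pos).mpr rfl⟩,
    fun ω hω => (biquadratic_eq_zero_iff_eq_omegaStar hω).mp, omegaStar_mem_Ioo, fun ω hω => ?_⟩
  rw [exists_D0_I_mul_eq_zero_iff hω.ne', biquadratic_eq_zero_iff_eq_omegaStar hω]
end
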